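/- (Main theorem.) Let φ be a continuous incentive function such that x_{iα} + φ_{iα}(x) ≥ 0 for every x ∈ Δ, every player i, and every strategy α. Then there exists an incentive equilibrium x̂ ∈ Δ, i.e., a point satisfying φ_{iα}(x̂) = x̂_{iα} · Σ_β φ_{iβ}(x̂) for every player i and every strategy α. -/

import Mathlib

open Finset

/-- Mixed strategy profile space `Δ`: player `i` has `s i + 1` pure strategies
(so every player has at least one strategy). -/
def Δset {n : ℕ} (s : Fin n → ℕ) : Set (∀ i, Fin (s i + 1) → ℝ) :=
  {x | (∀ i α, 0 ≤ x i α) ∧ ∀ i, ∑ α, x i α = 1}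

/-- The `α`-th standard unit vector of `ℝ^{m+1}` (pure strategy `α`). -/
def pureVec {m : ℕ} (α : Fin (m + 1)) : Fin (m + 1) → ℝ :=
  fun β => if β = α then 1 else 0

/-- Multilinear extension of a payoff function defined on pure profiles. -/
noncomputable def mulExt {n : ℕ} {s : Fin n → ℕ} (u : (∀ j, Fin (s j + 1)) → ℝ)
    (x : ∀ i, Fin (s i + 1) → ℝ) : ℝ :=
  ∑ p : ∀ j, Fin (s j + 1), (∏ j, x j (p j)) * u p

/-- The updating map `T(x)_i = (x_i + Σ_α φ_{iα}(x) e_{iα}) / (1 + Σ_β φ_{iβ}(x))`. -/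
noncomputable def Tmap {n : ℕ} {s : Fin n → ℕ}
    (φ : (∀ i, Fin (s i + 1) → ℝ) → ∀ i, Fin (s i + 1) → ℝ)
    (x : ∀ i, Fin (s i + 1) → ℝ) : ∀ i, Fin (s i + 1) → ℝ :=
  fun i α => (x i α + φ x i α) / (1 + ∑ β, φ x i β)

/-- `φ` is an incentive function. -/
def IsInc {n : ℕ} {s : Fin n → ℕ}
    (φ : (∀ i, Fin (s i + 1) → ℝ) → ∀ i, Fin (s i + 1) → ℝ) : Prop :=
  (∀ x i α, x i α = 0 → 0 ≤ φ x i α) ∧ ∀ x i, (∑ β, φ x i β) ≠ -1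

/-- `x` is an incentive equilibrium for `φ`. -/
def IncEq {n : ℕ} {s : Fin n → ℕ}
    (φ : (∀ i, Fin (s i + 1) → ℝ) → ∀ i, Fin (s i + 1) → ℝ)
    (x : ∀ i, Fin (s i + 1) → ℝ) : Prop :=
  ∀ i α, φ x i α = x i α * ∑ β, φ x i β

/-- `x` is a Nash equilibrium: each player's payoff is the maximum over pure deviations. -/
def NashEq {n : ℕ} {s : Fin n → ℕ} (u : Fin n → (∀ j, Fin (s j + 1)) → ℝ)
    (x : ∀ i, Fin (s i + 1) → ℝ) : Prop :=
  ∀ i, mulExt (u i) x =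
    Finset.univ.sup' Finset.univ_nonempty
      (fun α => mulExt (u i) (Function.update x i (pureVec α)))

/-!
On the product of the simplices `x + φ x` is nonnegative, so the map that adds it to `x` and
renormalizes each player's share is a continuous self-map whose fixed points are the equilibria.
A fixed point is provided by Brouwer's theorem, since the product of simplices is a retract of a
larger simplex.

Brouwer's theorem is derived from Scarf's lemma: in a finite set of points ranked by finitely many
agents and coloured by the agents, and suitably enlarged by one slack point for each agent, some
dominant set uses all colours. The lemma is a parity count of almost fully coloured sets (doors)
inside dominant sets (rooms), as in Sperner's lemma, but needs no triangulation. If the agents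
rank the points of a fine net of the simplex by their coordinates and each `x` has a colour `i` with
`x i ≤ f x i`, then the points of such a set lie close together, and in the limit they yield an `x`
with `x ≤ f x`.
-/

section Scarf

variable {X I α : Type*} [LinearOrder α] {v : I → X → α} {D R : Finset X} {m : I → X} {i k : I}
  {x y : X}

/-- Scarf's dominant sets: agent `i` ranks the points of `X` by `v i`, and `R` is dominant if no
point of `X` is, for all agents simultaneously, strictly better than the worst point of `R`. -/
def IsDominant (v : I → X → α) (R : Finset X) : Prop :=
  ∀ y, ∃ i, ∀ x ∈ R, v i y ≤ v i x

/-- A choice `m i` of a worst point of `D` for each agent `i`. -/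
def IsWorst (v : I → X → α) (D : Finset X) (m : I → X) : Prop :=
  ∀ i, m i ∈ D ∧ ∀ x ∈ D, v i (m i) ≤ v i x

/-- `y` is agent `i`'s best point among those that every other agent `j` prefers to `m j`. Adjoining
pivots is how a dominant set with worst points `m` grows to a larger one. -/
def IsPivot (v : I → X → α) (m : I → X) (i : I) (y : X) : Prop :=
  (∀ j ≠ i, v j (m j) < v j y) ∧ ∀ z, (∀ j ≠ i, v j (m j) < v j z) → v i z ≤ v i y

theorem IsDominant.mono (hR : IsDominant v R) (hDR : D ⊆ R) : IsDominant v D := fun y ↦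
  (hR y).imp fun _ hi x hx ↦ hi x (hDR hx)

theorem exists_isWorst (v : I → X → α) (hD : D.Nonempty) : ∃ m, IsWorst v D m := by
  choose m hm using fun i ↦ D.exists_min_image (v i) hD
  exact ⟨m, hm⟩

theorem IsDominant.exists_worst_eq (hD : IsDominant v D) (hv : ∀ i, (v i).Injective)
    (hm : IsWorst v D m) (hx : x ∈ D) : ∃ i, m i = x := by
  obtain ⟨i, hi⟩ := hD x
  exact ⟨i, hv i (le_antisymm ((hm i).2 x hx) (hi _ (hm i).1))⟩

theorem IsDominant.bijOn_worst [Fintype I] (hR : IsDominant v R) (hv : ∀ i, (v i).Injective)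
    (hm : IsWorst v R m) (hcard : #R = Fintype.card I) : Set.BijOn m Set.univ R := by
  classical
  have himage : univ.image m = R :=
    (image_subset_iff.2 fun i _ ↦ (hm i).1).antisymm fun x hx ↦ by
      simpa only [mem_image, mem_univ, true_and] using hR.exists_worst_eq hv hm hx
  have hinj : Set.InjOn m (univ : Finset I) := card_image_iff.1 (by rw [himage, hcard, card_univ])
  rw [← himage, coe_image, ← coe_univ]
  exact hinj.bijOn_image

theorem exists_isPivot [Finite X] (h : ∃ z, ∀ j ≠ i, v j (m j) < v j z) :
    ∃ y, IsPivot v m i y := by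
  obtain ⟨y, hy, hmax⟩ := Set.exists_max_image {z | ∀ j ≠ i, v j (m j) < v j z} (v i)
    (Set.toFinite _) h
  exact ⟨y, hy, hmax⟩

theorem IsPivot.eq {y' : X} (hy : IsPivot v m i y) (hy' : IsPivot v m i y')
    (hv : (v i).Injective) : y = y' :=
  hv (le_antisymm (hy'.2 y hy.1) (hy.2 y' hy'.1))

theorem IsPivot.notMem (hy : IsPivot v m i y) (hki : k ≠ i) (hmk : m k = m i)
    (hD : IsDominant v D) (hv : ∀ i, (v i).Injective) (hm : IsWorst v D m) : y ∉ D := by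
  intro hyD
  obtain ⟨j, rfl⟩ := hD.exists_worst_eq hv hm hyD
  by_cases hji : j = i
  · exact (hy.1 k hki).ne (by rw [hmk, hji])
  · exact (hy.1 j hji).false

theorem IsPivot.index_eq (hi : IsPivot v m i y) (hk : IsPivot v m k y) (hD : IsDominant v D)
    (hm : IsWorst v D m) : i = k := by
  by_contra hik
  obtain ⟨j, hj⟩ := hD y
  have hle := hj (m j) (hm j).1
  by_cases hji : j = i
  · exact (hk.1 j (hji ▸ hik)).not_ge hle
  · exact (hi.1 j hji).not_ge hle

theorem IsPivot.isDominant_insert [DecidableEq X] (hy : IsPivot v m i y) (hD : IsDominant v D)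
    (hm : IsWorst v D m) : IsDominant v (insert y D) := by
  intro z
  by_cases hz : ∀ j ≠ i, v j (m j) < v j z
  · obtain ⟨j, hj⟩ := hD z
    obtain rfl : j = i := by
      by_contra hji
      exact (hz j hji).not_ge (hj _ (hm j).1)
    exact ⟨j, forall_mem_insert .. |>.2 ⟨hy.2 z hz, hj⟩⟩
  · push Not at hz
    obtain ⟨j, hji, hj⟩ := hz
    exact ⟨j, forall_mem_insert .. |>.2
      ⟨hj.trans (hy.1 j hji).le, fun x hx ↦ hj.trans ((hm j).2 x hx)⟩⟩

theorem IsDominant.exists_isPivot_of_insert [Fintype I] [DecidableEq X]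
    (hR : IsDominant v (insert y D)) (hv : ∀ i, (v i).Injective) (hm : IsWorst v D m)
    (hcard : #D + 1 = Fintype.card I) (hy : y ∉ D) :
    ∃ i, (∃ k ≠ i, m k = m i) ∧ IsPivot v m i y := by
  obtain ⟨m', hm'⟩ := exists_isWorst v (insert_nonempty y D)
  obtain ⟨-, hinj, hsurj⟩ := hR.bijOn_worst hv hm' (by rw [card_insert_of_notMem hy, hcard])
  obtain ⟨i, -, rfl⟩ := hsurj (mem_coe.2 (mem_insert_self y D))
  have hm_eq : ∀ j ≠ i, m' j = m j := fun j hji ↦ by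
    have hjD : m' j ∈ D := (mem_insert.1 (hm' j).1).resolve_left
      (hji <| hinj (Set.mem_univ j) (Set.mem_univ i) ·)
    exact hv j (le_antisymm ((hm' j).2 _ (mem_insert_of_mem (hm j).1)) ((hm j).2 _ hjD))
  refine ⟨i, ?_, fun j hji ↦ ?_, fun z hz ↦ ?_⟩
  · obtain ⟨k, -, hk⟩ := hsurj (mem_coe.2 (mem_insert_of_mem (hm i).1))
    have hki : k ≠ i := by
      rintro rfl
      exact hy (hk ▸ (hm k).1)
    exact ⟨k, hki, by rw [← hm_eq k hki, hk]⟩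
  · rw [← hm_eq j hji]
    exact ((hm' j).2 _ (mem_insert_self _ D)).lt_of_ne fun h ↦
      hji (hinj (Set.mem_univ j) (Set.mem_univ i) (hv j h))
  · obtain ⟨j, hj⟩ := hR z
    by_cases hji : j = i
    · subst hji
      exact hj _ (mem_insert_self _ D)
    · exact absurd (hj _ (mem_insert_of_mem (hm j).1)) (hz j hji).not_ge

/-- Doors of Sperner's parity argument: `c` colours `D` bijectively by all colours but `i₀`. -/
def IsDoor (c : X → I) (i₀ : I) (D : Finset X) : Prop :=
  Set.BijOn c D {i₀}ᶜ

/-- Rooms of Sperner's parity argument: the dominant sets with as many points as there are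
colours. -/
def IsRoom [Fintype I] (v : I → X → α) (R : Finset X) : Prop :=
  #R = Fintype.card I ∧ IsDominant v R

variable {c : X → I} {i₀ : I}

theorem IsDoor.card_add_one [Fintype I] (hD : IsDoor c i₀ D) : #D + 1 = Fintype.card I := by
  classical
  have himage : D.image c = univ.erase i₀ := by
    rw [← coe_inj, coe_image, hD.image_eq, coe_erase, coe_univ, Set.compl_eq_univ_sdiff]
  rw [← card_image_iff.2 hD.injOn, himage, card_erase_add_one (mem_univ i₀), card_univ]

theorem IsDoor.erase_of_eq_color [DecidableEq X] (hD : IsDoor c i₀ (R.erase x)) (hx : x ∈ R)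
    (hy : y ∈ R) (hxy : x ≠ y) (hc : c x = c y) : IsDoor c i₀ (R.erase y) := by
  have hswap : Set.BijOn (Equiv.swap x y) (R.erase y) (R.erase x) :=
    Equiv.bijOn _ fun z ↦ by
      simp only [Equiv.swap_apply_def, mem_coe, mem_erase]
      grind
  refine (Set.BijOn.comp hD hswap).congr fun z _ ↦ ?_
  rw [Function.comp_apply, Equiv.swap_apply_def]
  split_ifs with hzx hzy
  · rw [hzx, hc]
  · rw [hzy, hc]
  · rfl

open scoped Classical in
theorem even_card_doors_of_not_surjOn [Fintype I] (hcard : #R = Fintype.card I)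
    (hR : ∃ i, ∀ x ∈ R, c x ≠ i) : Even #{D ∈ R.powerset | IsDoor c i₀ D} := by
  rcases ({D ∈ R.powerset | IsDoor c i₀ D}).eq_empty_or_nonempty with hempty | ⟨D, hD⟩
  · simp [hempty]
  have exists_erase_eq : ∀ D' ⊆ R, IsDoor c i₀ D' → ∃ z ∈ R, R.erase z = D' := fun D' hD'R hD' ↦ by
    obtain ⟨z, hz, rfl⟩ := exists_eq_insert_iff.2 ⟨hD'R, hD'.card_add_one.trans hcard.symm⟩
    exact ⟨z, mem_insert_self z D', erase_insert hz⟩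
  rw [mem_filter, mem_powerset] at hD
  obtain ⟨x, hx, rfl⟩ := exists_erase_eq D hD.1 hD.2
  have hDoor := hD.2
  obtain ⟨y, hy, hyx⟩ : c x ∈ c '' (R.erase x : Finset X) := by
    rw [hDoor.image_eq]
    rintro (hcx : c x = i₀)
    obtain ⟨i, hi⟩ := hR
    obtain ⟨y, hy, rfl⟩ := hDoor.surjOn (a := i) (hcx ▸ (hi x hx).symm)
    exact hi y (mem_of_mem_erase hy) rfl
  rw [mem_coe, mem_erase] at hy
  have hpair : {D ∈ R.powerset | IsDoor c i₀ D} = {R.erase x, R.erase y} := by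
    ext D'
    rw [mem_filter, mem_powerset, mem_insert, mem_singleton]
    constructor
    · rintro ⟨hD'R, hD'⟩
      obtain ⟨z, -, rfl⟩ := exists_erase_eq D' hD'R hD'
      by_contra! hz
      have hzx : x ≠ z := by rintro rfl; exact hz.1 rfl
      have hzy : y ≠ z := by rintro rfl; exact hz.2 rfl
      exact hy.1 (hD'.injOn (by simp [hzy, hy.2]) (by simp [hzx, hx]) hyx)
    · rintro (rfl | rfl)
      · exact hD
      · exact ⟨erase_subset y R, hDoor.erase_of_eq_color hx hy.2 hy.1.symm hyx.symm⟩
  have hne : R.erase x ≠ R.erase y := fun h ↦ hy.1 ((erase_inj R hx).1 h).symm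
  rw [hpair, card_pair hne]
  exact even_two

open scoped Classical in
theorem IsWorst.card_filter_exists_ne_eq [Fintype I] (hm : IsWorst v D m)
    (hv : ∀ i, (v i).Injective) (hD : IsDominant v D) (hcard : #D + 1 = Fintype.card I) :
    #{i | ∃ k ≠ i, m k = m i} = 2 := by
  obtain ⟨a, -, b, -, hab, hmab⟩ := exists_ne_map_eq_of_card_lt_of_maps_to (s := univ) (t := D)
    (by rw [card_univ]; lia) (f := m) fun i _ ↦ (hm i).1
  suffices hpair : ({i | ∃ k ≠ i, m k = m i} : Finset I) = {a, b} by rw [hpair, card_pair hab]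
  have hinj : Set.InjOn m (univ.erase a : Finset I) := by
    have himage : (univ.erase a).image m = D := by
      refine (image_subset_iff.2 fun i _ ↦ (hm i).1).antisymm fun x hx ↦ ?_
      obtain ⟨i, rfl⟩ := hD.exists_worst_eq hv hm hx
      by_cases hia : i = a
      · exact mem_image.2 ⟨b, by simp [hab.symm], by rw [hia, hmab]⟩
      · exact mem_image_of_mem m (by simp [hia])
    rw [← card_image_iff, himage, card_erase_of_mem (mem_univ a), card_univ, ← hcard,
      Nat.add_sub_cancel]
  simp only [Set.InjOn, coe_erase, coe_univ, Set.mem_sdiff, Set.mem_univ, true_and,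
    Set.mem_singleton_iff] at hinj
  ext i
  simp only [mem_filter, mem_univ, true_and, mem_insert, mem_singleton]
  grind

open scoped Classical in
theorem IsDominant.card_rooms_eq_two [Fintype X] [Fintype I] (hD : IsDominant v D)
    (hv : ∀ i, (v i).Injective) (hm : IsWorst v D m) (hcard : #D + 1 = Fintype.card I)
    (hpivot : ∀ i, ∃ y, IsPivot v m i y) : #{R | D ⊆ R ∧ IsRoom v R} = 2 := by
  choose p hp using hpivot
  have hnotMem : ∀ i, (∃ k ≠ i, m k = m i) → p i ∉ D := fun i ⟨k, hki, hmk⟩ ↦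
    (hp i).notMem hki hmk hD hv hm
  have hrooms : ({R | D ⊆ R ∧ IsRoom v R} : Finset (Finset X)) =
      ({i | ∃ k ≠ i, m k = m i} : Finset I).image fun i ↦ insert (p i) D := by
    ext R
    simp only [mem_filter, mem_univ, true_and, mem_image]
    constructor
    · rintro ⟨hDR, hRcard, hR⟩
      obtain ⟨y, hy, rfl⟩ := exists_eq_insert_iff.2 ⟨hDR, hcard.trans hRcard.symm⟩
      obtain ⟨i, hi, hiy⟩ := hR.exists_isPivot_of_insert hv hm hcard hy
      exact ⟨i, hi, by rw [(hp i).eq hiy (hv i)]⟩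
    · rintro ⟨i, hi, rfl⟩
      exact ⟨subset_insert _ D, by rw [card_insert_of_notMem (hnotMem i hi), hcard],
        (hp i).isDominant_insert hD hm⟩
  have hinj : Set.InjOn (fun i ↦ insert (p i) D) ({i | ∃ k ≠ i, m k = m i} : Finset I) := by
    intro i hi k _ hik
    have hpik : p i = p k := (insert_inj (hnotMem i (mem_filter.1 hi).2)).1 hik
    exact (hp i).index_eq (hpik ▸ hp k) hD hm
  rw [hrooms, card_image_of_injOn hinj, hm.card_filter_exists_ne_eq hv hD hcard]

open scoped Classical in
theorem even_card_rooms [Fintype X] [Fintype I] (hv : ∀ i, (v i).Injective) (hD : D.Nonempty)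
    (hcard : #D + 1 = Fintype.card I) (hbetter : ∀ i, ∃ y, ∀ j ≠ i, ∃ x ∈ D, v j x < v j y) :
    Even #{R | D ⊆ R ∧ IsRoom v R} := by
  by_cases hdom : IsDominant v D
  · obtain ⟨m, hm⟩ := exists_isWorst v hD
    rw [hdom.card_rooms_eq_two hv hm hcard fun i ↦ ?_]
    · exact even_two
    · obtain ⟨y, hy⟩ := hbetter i
      refine exists_isPivot ⟨y, fun j hji ↦ ?_⟩
      obtain ⟨x, hx, hxy⟩ := hy j hji
      exact ((hm j).2 x hx).trans_lt hxy
  · rw [filter_false_of_mem fun R _ hR ↦ hdom (hR.2.2.mono hR.1)]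
    exact Even.zero

open scoped Classical in
theorem sum_card_rooms_eq_sum_card_doors [Fintype X] [Fintype I] :
    ∑ D with IsDoor c i₀ D, #{R | D ⊆ R ∧ IsRoom v R} =
      ∑ R with IsRoom v R, #{D ∈ R.powerset | IsDoor c i₀ D} := by
  convert sum_card_bipartiteAbove_eq_sum_card_bipartiteBelow (s := {D | IsDoor c i₀ D})
    (t := {R | IsRoom v R}) (· ⊆ ·) using 3
  · ext R
    simp [bipartiteAbove, and_comm]
  · ext D
    simp [bipartiteBelow, and_comm]

/-- The slack points of Scarf's lemma: `s i` is agent `i`'s worst point, while `i` prefers each of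
the other slack points to every point that is not slack. -/
structure IsSlack (v : I → X → α) (s : I → X) : Prop where
  lt_of_ne : ∀ i x, x ≠ s i → v i (s i) < v i x
  lt_of_notMem_range : ∀ i j x, j ≠ i → x ∉ Set.range s → v i x < v i (s j)

variable {s : I → X}

theorem IsSlack.le (hs : IsSlack v s) (i : I) (x : X) : v i (s i) ≤ v i x := by
  by_cases hx : x = s i
  · rw [hx]
  · exact (hs.lt_of_ne i x hx).le

theorem isDoor_image_slack [Fintype I] [DecidableEq I] [DecidableEq X] (hc : ∀ i, c (s i) = i) :
    IsDoor c i₀ ((univ.erase i₀).image s) := by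
  have himage : (((univ.erase i₀).image s : Finset X) : Set X) = s '' {i₀}ᶜ := by
    rw [coe_image, coe_erase, coe_univ, Set.compl_eq_univ_sdiff]
  have hinj : s.Injective := Function.LeftInverse.injective hc
  rw [IsDoor, himage]
  exact hinj.injOn.bijOn_image.symm
    ⟨Set.forall_mem_image.2 fun i _ ↦ congrArg s (hc i), fun i _ ↦ hc i⟩

theorem IsDoor.eq_image_slack [Fintype I] [DecidableEq I] [DecidableEq X] (hD : IsDoor c i₀ D)
    (hc : ∀ i, c (s i) = i) (hDs : ∀ x ∈ D, x ∈ Set.range s) : D = (univ.erase i₀).image s := by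
  have hDoor := isDoor_image_slack (i₀ := i₀) hc
  refine eq_of_subset_of_card_le (fun x hx ↦ ?_) ?_
  · obtain ⟨i, rfl⟩ := hDs x hx
    have hi : c (s i) ≠ i₀ := hD.mapsTo hx
    rw [hc] at hi
    exact mem_image_of_mem s (mem_erase.2 ⟨hi, mem_univ i⟩)
  · exact Nat.le_of_add_le_add_right (hDoor.card_add_one.trans hD.card_add_one.symm).le

theorem IsSlack.isDominant_insert_iff [Fintype I] [DecidableEq I] [DecidableEq X]
    (hs : IsSlack v s) (hy : y ∉ (univ.erase i₀).image s) :
    IsDominant v (insert y ((univ.erase i₀).image s)) ↔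
      ∀ z ∉ (univ.erase i₀).image s, v i₀ z ≤ v i₀ y := by
  have mem_outer : ∀ j ≠ i₀, s j ∈ (univ.erase i₀).image s := fun j hj ↦
    mem_image_of_mem s (mem_erase.2 ⟨hj, mem_univ j⟩)
  constructor
  · intro hdom z hz
    obtain ⟨j, hj⟩ := hdom z
    by_cases hji : j = i₀
    · exact hji ▸ hj y (mem_insert_self y _)
    · have hzj : z ≠ s j := fun h ↦ hz (h ▸ mem_outer j hji)
      exact absurd (hj _ (mem_insert_of_mem (mem_outer j hji))) (hs.lt_of_ne j z hzj).not_ge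
  · intro hmax z
    by_cases hz : z ∈ (univ.erase i₀).image s
    · obtain ⟨j, -, rfl⟩ := mem_image.1 hz
      exact ⟨j, fun x _ ↦ hs.le j x⟩
    refine ⟨i₀, forall_mem_insert .. |>.2 ⟨hmax z hz, forall_mem_image.2 fun j hj ↦ ?_⟩⟩
    by_cases hzs : z ∈ Set.range s
    · obtain ⟨k, rfl⟩ := hzs
      obtain rfl : k = i₀ := by
        by_contra hk
        exact hz (mem_outer k hk)
      exact hs.le k _
    · exact (hs.lt_of_notMem_range i₀ j z (mem_erase.1 hj).1 hzs).le

open scoped Classical in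
theorem IsSlack.card_rooms_outer [Fintype X] [Fintype I] (hs : IsSlack v s)
    (hv : ∀ i, (v i).Injective) (hc : ∀ i, c (s i) = i) (i₀ : I) :
    #{R | (univ.erase i₀).image s ⊆ R ∧ IsRoom v R} = 1 := by
  have hcard := (isDoor_image_slack (i₀ := i₀) hc).card_add_one
  have hcompl : ((univ.erase i₀).image s)ᶜ.Nonempty := by
    rw [← card_pos, card_compl]
    have := Fintype.card_le_of_injective s (Function.LeftInverse.injective hc)
    lia
  obtain ⟨y, hy, hmax⟩ := exists_max_image _ (v i₀) hcompl
  simp only [mem_compl] at hy hmax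
  refine card_eq_one.2 ⟨insert y ((univ.erase i₀).image s), ?_⟩
  ext R
  simp only [mem_filter, mem_univ, true_and, mem_singleton]
  constructor
  · rintro ⟨hsub, hRcard, hR⟩
    obtain ⟨z, hz, rfl⟩ := exists_eq_insert_iff.2 ⟨hsub, hcard.trans hRcard.symm⟩
    rw [hv i₀ (le_antisymm (hmax z hz) ((hs.isDominant_insert_iff hz).1 hR y hy))]
  · rintro rfl
    exact ⟨subset_insert y _, by rw [card_insert_of_notMem hy, hcard],
      (hs.isDominant_insert_iff hy).2 hmax⟩

theorem IsSlack.exists_isDominant_of_injective [Finite X] [Finite I] [Nonempty I]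
    (hs : IsSlack v s) (hv : ∀ i, (v i).Injective) (hc : ∀ i, c (s i) = i) :
    ∃ R, IsDominant v R ∧ ∀ i, ∃ x ∈ R, c x = i := by
  classical
  have := Fintype.ofFinite X
  have := Fintype.ofFinite I
  by_contra! hcolor
  obtain ⟨i₀⟩ := ‹Nonempty I›
  set D₀ := (univ.erase i₀).image s
  have heven : Even (∑ D with IsDoor c i₀ D, #{R | D ⊆ R ∧ IsRoom v R}) := by
    rw [sum_card_rooms_eq_sum_card_doors]
    exact even_sum _ fun R hR ↦ have hR := (mem_filter.1 hR).2
      even_card_doors_of_not_surjOn hR.1 (hcolor R hR.2)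
  have hinner : ∀ D, IsDoor c i₀ D → D ≠ D₀ → Even #{R | D ⊆ R ∧ IsRoom v R} := by
    intro D hD hne
    obtain ⟨x, hx, hxs⟩ : ∃ x ∈ D, x ∉ Set.range s := by
      by_contra! h
      exact hne (hD.eq_image_slack hc h)
    exact even_card_rooms hv ⟨x, hx⟩ hD.card_add_one fun i ↦
      ⟨s i, fun j hji ↦ ⟨x, hx, hs.lt_of_notMem_range j i x hji.symm hxs⟩⟩
  have hD₀ : D₀ ∈ ({D | IsDoor c i₀ D} : Finset (Finset X)) :=
    mem_filter.2 ⟨mem_univ _, isDoor_image_slack hc⟩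
  have hodd : Odd (∑ D with IsDoor c i₀ D, #{R | D ⊆ R ∧ IsRoom v R}) := by
    rw [← add_sum_erase _ _ hD₀, hs.card_rooms_outer hv hc i₀]
    refine odd_one.add_even (even_sum _ fun D hD ↦ ?_)
    rw [mem_erase, mem_filter] at hD
    exact hinner D hD.2.2 hD.1
  exact Nat.not_even_iff_odd.2 hodd heven

theorem IsSlack.exists_isDominant [Finite X] [Finite I] [Nonempty I] (hs : IsSlack v s)
    (hc : ∀ i, c (s i) = i) : ∃ R, IsDominant v R ∧ ∀ i, ∃ x ∈ R, c x = i := by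
  -- Break ties, so that the ranking of each agent becomes injective.
  obtain ⟨n, ⟨e⟩⟩ := Finite.exists_equiv_fin X
  let w : I → X → α ×ₗ Fin n := fun i x ↦ toLex (v i x, e x)
  have lt_of_lt : ∀ {i x y}, v i x < v i y → w i x < w i y := fun h ↦
    Prod.Lex.toLex_lt_toLex.2 (.inl h)
  have hw : ∀ i, (w i).Injective := fun i x y hxy ↦
    e.injective (Prod.ext_iff.1 (toLex.injective hxy)).2
  have hsw : IsSlack w s :=
    ⟨fun i x hx ↦ lt_of_lt (hs.lt_of_ne i x hx),
      fun i j x hj hx ↦ lt_of_lt (hs.lt_of_notMem_range i j x hj hx)⟩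
  obtain ⟨R, hR, hcR⟩ := hsw.exists_isDominant_of_injective hw hc
  exact ⟨R, fun y ↦ (hR y).imp fun i hi x hx ↦ Prod.Lex.monotone_fst _ _ (hi x hx), hcR⟩

/-- Scarf's lemma without slack points; in return, only colours of points of `D` bound `y`. -/
theorem exists_finset_forall_exists_mem_forall_le [Finite X] [Finite I] (v : I → X → α)
    (c : X → I) : ∃ D : Finset X, ∀ y, ∃ x₀ ∈ D, ∀ x ∈ D, v (c x₀) y ≤ v (c x₀) x := by
  classical
  rcases isEmpty_or_nonempty X with _ | ⟨⟨x⟩⟩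
  · exact ⟨∅, isEmptyElim⟩
  have : Nonempty I := ⟨c x⟩
  let w : I → X ⊕ I → WithBot (WithTop α) := fun i ↦
    Sum.elim (fun x ↦ ((v i x : WithTop α) : WithBot (WithTop α))) fun j ↦
      if j = i then ⊥ else ⊤
  have hs : IsSlack w Sum.inr := by
    constructor
    · rintro i (x | j) hx
      · simp [w]
      · have hji : j ≠ i := fun h ↦ hx (h ▸ rfl)
        simp [w, hji]
    · rintro i j (x | k) hj hx
      · simpa [w, hj] using WithBot.coe_lt_coe.2 (WithTop.coe_lt_top (v i x))
      · exact absurd ⟨k, rfl⟩ hx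
  obtain ⟨R, hR, hcR⟩ := hs.exists_isDominant (c := Sum.elim c id) fun _ ↦ rfl
  refine ⟨R.toLeft, fun y ↦ ?_⟩
  obtain ⟨i, hi⟩ := hR (Sum.inl y)
  obtain ⟨x₀ | j, hx₀, rfl⟩ := hcR i
  · exact ⟨x₀, mem_toLeft.2 hx₀, fun x hx ↦ by simpa [w] using hi _ (mem_toLeft.1 hx)⟩
  · simpa [w] using hi _ hx₀

end Scarf

section FixedPoint

/-- The fixed point property of a set `s`, for maps that need only be defined and continuous
on `s`. -/
def HasFixedPointProperty {E : Type*} [TopologicalSpace E] (s : Set E) : Prop :=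
  ∀ f : E → E, ContinuousOn f s → Set.MapsTo f s s → ∃ x ∈ s, Function.IsFixedPt f x

theorem HasFixedPointProperty.of_retract {E F : Type*} [TopologicalSpace E] [TopologicalSpace F]
    {s : Set E} {t : Set F} (hs : HasFixedPointProperty s) {i : F → E} {r : E → F}
    (hi : ContinuousOn i t) (hr : ContinuousOn r s) (hit : Set.MapsTo i t s)
    (hrs : Set.MapsTo r s t) (hri : Set.LeftInvOn r i t) : HasFixedPointProperty t := by
  intro f hf hft
  obtain ⟨z, hz, hfz⟩ := hs (i ∘ f ∘ r) (hi.comp (hf.comp hr hrs) (hft.comp hrs))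
    (hit.comp (hft.comp hrs))
  refine ⟨r z, hrs hz, ?_⟩
  calc f (r z) = r (i (f (r z))) := (hri (hft (hrs hz))).symm
    _ = r z := congrArg r hfz

variable {I : Type*} [Fintype I]

theorem one_le_sum_of_forall_exists_le {J : Finset I} (hJ : J.Nonempty) {b : I → ℝ}
    (hb : ∀ i ∈ J, 0 ≤ b i) (h : ∀ z ∈ stdSimplex ℝ I, ∃ i ∈ J, z i ≤ b i) :
    1 ≤ ∑ i ∈ J, b i := by
  classical
  by_contra! hlt
  have hJcard : (0 : ℝ) < #J := by exact_mod_cast hJ.card_pos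
  set η := (1 - ∑ i ∈ J, b i) / #J
  have hη : 0 < η := div_pos (sub_pos.2 hlt) hJcard
  have hz : (fun i ↦ if i ∈ J then b i + η else 0) ∈ stdSimplex ℝ I := by
    refine ⟨fun i ↦ ?_, ?_⟩
    · dsimp only
      split_ifs with hi
      exacts [add_nonneg (hb i hi) hη.le, le_rfl]
    · rw [sum_ite_mem, univ_inter, sum_add_distrib, sum_const, nsmul_eq_mul,
        mul_div_cancel₀ _ hJcard.ne', add_sub_cancel]
  obtain ⟨i, hi, hle⟩ := h _ hz
  rw [if_pos hi] at hle
  linarith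

theorem le_add_of_mem_stdSimplex {x ν : I → ℝ} {ε : ℝ} (hx : x ∈ stdSimplex ℝ I) (hνx : ν ≤ x)
    (hν : 1 ≤ ∑ i, ν i + ε) (i : I) : x i ≤ ν i + ε := by
  have hi : x i - ν i ≤ ∑ j, (x j - ν j) :=
    single_le_sum (f := fun j ↦ x j - ν j) (fun j _ ↦ sub_nonneg.2 (hνx j)) (mem_univ i)
  rw [sum_sub_distrib, hx.2] at hi
  linarith

theorem exists_finset_stdSimplex_forall_le_add (c : (I → ℝ) → I) {δ : ℝ} (hδ : 0 < δ) :
    ∃ D : Finset (I → ℝ), ↑D ⊆ stdSimplex ℝ I ∧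
      ∀ z ∈ stdSimplex ℝ I, ∃ x₀ ∈ D, ∀ x ∈ D, z (c x₀) ≤ x (c x₀) + δ := by
  classical
  obtain ⟨t, hts, htfin, ht⟩ := (isCompact_stdSimplex ℝ I).finite_cover_balls hδ
  have := htfin.to_subtype
  obtain ⟨D, hD⟩ := exists_finset_forall_exists_mem_forall_le
    (fun i (x : t) ↦ (x : I → ℝ) i) fun x ↦ c x
  refine ⟨D.image (↑), ?_, fun z hz ↦ ?_⟩
  · rw [coe_image]
    exact Set.image_subset_iff.2 fun x _ ↦ hts x.2
  · obtain ⟨y, hy, hzy⟩ := Set.mem_iUnion₂.1 (ht hz)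
    obtain ⟨x₀, hx₀, hle⟩ := hD ⟨y, hy⟩
    refine ⟨x₀, mem_image_of_mem _ hx₀, forall_mem_image.2 fun x hx ↦ ?_⟩
    have hdist := (dist_le_pi_dist z y (c x₀)).trans_lt hzy
    rw [Real.dist_eq] at hdist
    linarith [hle x hx, (abs_lt.1 hdist).2]

theorem exists_finset_near_of_coloring (c : (I → ℝ) → I) {ε : ℝ} (hε : 0 < ε) :
    ∃ (D : Finset (I → ℝ)) (ν : I → ℝ), D.Nonempty ∧ ↑D ⊆ stdSimplex ℝ I ∧
      (∀ x ∈ D, ∀ i, ν i ≤ x i ∧ x i ≤ ν i + ε) ∧ ∀ i, (∃ x ∈ D, c x = i) ∨ ν i = 0 := by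
  classical
  have : Nonempty I := ⟨c 0⟩
  have hI : (0 : ℝ) < Fintype.card I := by exact_mod_cast Fintype.card_pos
  set δ := ε / Fintype.card I
  have hδ : 0 < δ := div_pos hε hI
  obtain ⟨D, hDs, hD⟩ := exists_finset_stdSimplex_forall_le_add c hδ
  have hDne : D.Nonempty := by
    obtain ⟨x₀, hx₀, -⟩ := hD _ (single_mem_stdSimplex ℝ (Classical.arbitrary I))
    exact ⟨x₀, hx₀⟩
  choose m hmD hm using fun i : I ↦ D.exists_min_image (· i) hDne
  let ν : I → ℝ := fun i ↦ if i ∈ D.image c then m i i else 0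
  have hνx : ∀ x ∈ D, ν ≤ x := fun x hx i ↦ by
    dsimp only [ν]
    split_ifs
    exacts [hm i x hx, (hDs hx).1 i]
  have hsum : 1 ≤ ∑ i, ν i + ε := calc
    1 ≤ ∑ i ∈ D.image c, (m i i + δ) :=
      one_le_sum_of_forall_exists_le (hDne.image c)
        (fun i _ ↦ add_nonneg ((hDs (hmD i)).1 i) hδ.le) fun z hz ↦ by
          obtain ⟨x₀, hx₀, hle⟩ := hD z hz
          exact ⟨c x₀, mem_image_of_mem c hx₀, hle _ (hmD (c x₀))⟩
    _ = ∑ i, ν i + #(D.image c) * δ := by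
      rw [sum_add_distrib, sum_const, nsmul_eq_mul, sum_ite_mem, univ_inter]
    _ ≤ ∑ i, ν i + Fintype.card I * δ := by
      gcongr
      exact card_le_univ _
    _ = ∑ i, ν i + ε := by rw [mul_div_cancel₀ _ hI.ne']
  refine ⟨D, ν, hDne, hDs, fun x hx i ↦
    ⟨hνx x hx i, le_add_of_mem_stdSimplex (hDs hx) (hνx x hx) hsum i⟩, fun i ↦ ?_⟩
  by_cases hi : i ∈ D.image c
  · exact .inl (mem_image.1 hi)
  · exact .inr (if_neg hi)

theorem exists_forall_le_or_mem_cthickening [Nonempty I] {A : I → Set (I → ℝ)}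
    (hA : stdSimplex ℝ I ⊆ ⋃ i, A i) {ε : ℝ} (hε : 0 < ε) :
    ∃ x ∈ stdSimplex ℝ I, ∀ i, x i ≤ ε ∨ x ∈ Metric.cthickening ε (A i) := by
  choose! c hc using fun x (hx : x ∈ stdSimplex ℝ I) ↦ Set.mem_iUnion.1 (hA hx)
  obtain ⟨D, ν, ⟨x₀, hx₀⟩, hDs, hν, hcν⟩ := exists_finset_near_of_coloring c hε
  refine ⟨x₀, hDs hx₀, fun i ↦ (hcν i).symm.imp (fun hi ↦ ?_) ?_⟩
  · simpa only [hi, zero_add] using (hν x₀ hx₀ i).2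
  · rintro ⟨x, hx, rfl⟩
    refine Metric.mem_cthickening_of_dist_le x₀ x ε _ (hc x (hDs hx)) ?_
    refine (dist_pi_le_iff hε.le).2 fun j ↦ ?_
    rw [Real.dist_eq, abs_sub_le_iff]
    constructor <;> linarith [hν x hx j, hν x₀ hx₀ j]

theorem exists_forall_eq_zero_or_mem_of_isClosed [Nonempty I] {A : I → Set (I → ℝ)}
    (hclosed : ∀ i, IsClosed (A i)) (hA : stdSimplex ℝ I ⊆ ⋃ i, A i) :
    ∃ x ∈ stdSimplex ℝ I, ∀ i, x i = 0 ∨ x ∈ A i := by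
  let K : ℕ → Set (I → ℝ) := fun n ↦
    stdSimplex ℝ I ∩ ⋂ i, {x | x i ≤ 1 / (n + 1 : ℝ)} ∪ Metric.cthickening (1 / (n + 1 : ℝ)) (A i)
  have hKclosed : ∀ n, IsClosed (K n) := fun n ↦
    (isClosed_stdSimplex ℝ I).inter <| isClosed_iInter fun i ↦
      (isClosed_le (continuous_apply i) continuous_const).union Metric.isClosed_cthickening
  have hKmono : ∀ n, K (n + 1) ⊆ K n := fun n ↦ by
    have hn : 1 / ((n + 1 : ℕ) + 1 : ℝ) ≤ 1 / (n + 1 : ℝ) := Nat.one_div_le_one_div n.le_succ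
    exact Set.inter_subset_inter_right _ <| Set.iInter_mono fun i ↦ Set.union_subset_union
      (fun x hx ↦ le_trans hx hn) (Metric.cthickening_mono hn (A i))
  have hKne : ∀ n, (K n).Nonempty := fun n ↦ by
    obtain ⟨x, hx, h⟩ := exists_forall_le_or_mem_cthickening hA (ε := 1 / (n + 1 : ℝ))
      Nat.one_div_pos_of_nat
    exact ⟨x, hx, Set.mem_iInter.2 h⟩
  obtain ⟨x, hx⟩ := IsCompact.nonempty_iInter_of_sequence_nonempty_isCompact_isClosed K hKmono hKne
    ((isCompact_stdSimplex ℝ I).of_isClosed_subset (hKclosed 0) Set.inter_subset_left) hKclosed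
  rw [Set.mem_iInter] at hx
  refine ⟨x, (hx 0).1, fun i ↦ or_iff_not_imp_left.2 fun hxi ↦ ?_⟩
  have hpos : 0 < x i := ((hx 0).1.1 i).lt_of_ne' hxi
  rw [← (hclosed i).closure_eq, Metric.closure_eq_iInter_cthickening]
  refine Set.mem_iInter₂.2 fun ε hε ↦ ?_
  obtain ⟨n, hn⟩ := exists_nat_one_div_lt (lt_min hpos hε)
  have hmem := (Set.mem_iInter.1 (hx n).2 i).resolve_left
    (not_le.2 (hn.trans_le (min_le_left _ _)))
  exact Metric.cthickening_mono (hn.le.trans (min_le_right _ _)) (A i) hmem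

theorem hasFixedPointProperty_stdSimplex [Nonempty I] :
    HasFixedPointProperty (stdSimplex ℝ I) := by
  intro f hf hfs
  have hcover : stdSimplex ℝ I ⊆ ⋃ i, {x | x ∈ stdSimplex ℝ I ∧ x i ≤ f x i} := fun x hx ↦ by
    obtain ⟨i, -, hi⟩ := exists_le_of_sum_le univ_nonempty (f := x) (g := f x)
      (by rw [hx.2, (hfs hx).2])
    exact Set.mem_iUnion.2 ⟨i, hx, hi⟩
  obtain ⟨x, hx, h⟩ := exists_forall_eq_zero_or_mem_of_isClosed (fun i ↦
    (isClosed_stdSimplex ℝ I).isClosed_le (continuous_apply i).continuousOn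
      ((continuous_apply i).comp_continuousOn hf)) hcover
  have hle : ∀ i ∈ univ, x i ≤ f x i := fun i _ ↦
    (h i).elim (fun hi ↦ hi ▸ (hfs hx).1 i) And.right
  have heq := (sum_eq_sum_iff_of_le hle).1 (by rw [hx.2, (hfs hx).2])
  exact ⟨x, hx, funext fun i ↦ (heq i (mem_univ i)).symm⟩

end FixedPoint

section Retraction

variable {K : Type*} [Fintype K]

/-- A retraction of the nonnegative orthant onto the simplex: mass missing from `y` is
distributed evenly, excess mass is removed by rescaling. -/
noncomputable def simplexRetraction (y : K → ℝ) : K → ℝ := fun α ↦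
  (y α + max (1 - ∑ β, y β) 0 / Fintype.card K) / max (∑ β, y β) 1

theorem continuous_simplexRetraction : Continuous (simplexRetraction (K := K)) := by
  refine continuous_pi fun α ↦ Continuous.div (by fun_prop) (by fun_prop) fun y ↦ ?_
  exact (lt_max_of_lt_right one_pos).ne'

theorem simplexRetraction_mem_stdSimplex [Nonempty K] {y : K → ℝ} (hy : 0 ≤ y) :
    simplexRetraction y ∈ stdSimplex ℝ K := by
  have hden : 0 < max (∑ β, y β) 1 := lt_max_of_lt_right one_pos
  refine ⟨fun α ↦ div_nonneg (add_nonneg (hy α) (by positivity)) hden.le, ?_⟩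
  simp only [simplexRetraction]
  rw [← sum_div, div_eq_one_iff_eq hden.ne', sum_add_distrib, sum_const, card_univ, nsmul_eq_mul,
    mul_div_cancel₀ _ (Nat.cast_ne_zero.2 Fintype.card_ne_zero)]
  rcases le_total (∑ β, y β) 1 with h | h
  · rw [max_eq_right h, max_eq_left (sub_nonneg.2 h), add_sub_cancel]
  · rw [max_eq_left h, max_eq_right (sub_nonpos.2 h), add_zero]

theorem simplexRetraction_eq_self {y : K → ℝ} (hy : ∑ α, y α = 1) : simplexRetraction y = y := by
  funext α
  simp [simplexRetraction, hy]

end Retraction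

section Product

variable {ι : Type*} {κ : ι → Type*} [∀ i, Fintype (κ i)]

/-- Scaling by `1 / card ι` embeds the product of simplices into the simplex on the disjoint union
of the index sets, and `simplexRetraction` retracts the latter onto it. -/
theorem hasFixedPointProperty_pi_stdSimplex [Finite ι] [∀ i, Nonempty (κ i)] :
    HasFixedPointProperty (Set.univ.pi fun i ↦ stdSimplex ℝ (κ i)) := by
  rcases isEmpty_or_nonempty ι with _ | _
  · exact fun f _ _ ↦ ⟨0, fun i ↦ isEmptyElim i, Subsingleton.elim _ _⟩
  have := Fintype.ofFinite ι
  have : Nonempty (Σ i, κ i) := ⟨⟨Classical.arbitrary ι, Classical.arbitrary _⟩⟩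
  have hN : (Fintype.card ι : ℝ) ≠ 0 := Nat.cast_ne_zero.2 Fintype.card_ne_zero
  refine (hasFixedPointProperty_stdSimplex (I := Σ i, κ i)).of_retract
    (i := fun x k ↦ x k.1 k.2 / Fintype.card ι)
    (r := fun z i ↦ simplexRetraction fun α ↦ Fintype.card ι * z ⟨i, α⟩)
    (Continuous.continuousOn (by fun_prop)) ?_ ?_ ?_ ?_
  · exact (continuous_pi fun i ↦ continuous_simplexRetraction.comp (by fun_prop)).continuousOn
  · intro x hx
    refine ⟨fun k ↦ div_nonneg ((hx k.1 trivial).1 k.2) (Nat.cast_nonneg _), ?_⟩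
    rw [← sum_div, Fintype.sum_sigma, sum_congr rfl fun i _ ↦ (hx i trivial).2, sum_const,
      card_univ, nsmul_one, div_self hN]
  · exact fun z hz i _ ↦ simplexRetraction_mem_stdSimplex fun α ↦
      mul_nonneg (Nat.cast_nonneg _) (hz.1 ⟨i, α⟩)
  · intro x hx
    funext i
    simp only [mul_div_cancel₀ _ hN]
    exact simplexRetraction_eq_self (hx i trivial).2

/-- The update by the incentive `fun x ↦ x + φ x`, whose equilibria are those of `φ`. Unlike the
denominator `1 + ∑ β, φ x i β` in the update by `φ` itself, the denominator is at least `1` on the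
product of the simplices. -/
noncomputable def incentiveUpdate (φ : (∀ i, κ i → ℝ) → ∀ i, κ i → ℝ) (x : ∀ i, κ i → ℝ) :
    ∀ i, κ i → ℝ := fun i α ↦
  (x i α + (x i α + φ x i α)) / (1 + ∑ β, (x i β + φ x i β))

variable {φ : (∀ i, κ i → ℝ) → ∀ i, κ i → ℝ}

theorem incentiveUpdate_mem {x : ∀ i, κ i → ℝ} (hx : x ∈ Set.univ.pi fun i ↦ stdSimplex ℝ (κ i))
    (hpos : ∀ i α, 0 ≤ x i α + φ x i α) :
    incentiveUpdate φ x ∈ Set.univ.pi fun i ↦ stdSimplex ℝ (κ i) := by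
  intro i hi
  have hden : 0 < 1 + ∑ β, (x i β + φ x i β) :=
    add_pos_of_pos_of_nonneg one_pos (sum_nonneg fun β _ ↦ hpos i β)
  refine ⟨fun α ↦ div_nonneg (add_nonneg ((hx i hi).1 α) (hpos i α)) hden.le, ?_⟩
  simp only [incentiveUpdate]
  rw [← sum_div, sum_add_distrib, (hx i hi).2, div_self hden.ne']

theorem continuousOn_incentiveUpdate {S : Set (∀ i, κ i → ℝ)} (hcont : ContinuousOn φ S)
    (hpos : ∀ x ∈ S, ∀ i α, 0 ≤ x i α + φ x i α) : ContinuousOn (incentiveUpdate φ) S := by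
  have happly : ∀ i α, ContinuousOn (fun x ↦ x i α + φ x i α) S := fun i α ↦ by fun_prop
  refine continuousOn_pi.2 fun i ↦ continuousOn_pi.2 fun α ↦ ContinuousOn.div ?_ ?_ fun x hx ↦ ?_
  · exact ContinuousOn.add (by fun_prop) (happly i α)
  · exact continuousOn_const.add (continuousOn_finsetSum _ fun β _ ↦ happly i β)
  · exact (add_pos_of_pos_of_nonneg one_pos (sum_nonneg fun β _ ↦ hpos x hx i β)).ne'

theorem eq_mul_sum_of_isFixedPt_incentiveUpdate {x : ∀ i, κ i → ℝ}
    (hx : Function.IsFixedPt (incentiveUpdate φ) x) {i : ι} (hsum : ∑ α, x i α = 1)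
    (hpos : ∀ α, 0 ≤ x i α + φ x i α) (α : κ i) : φ x i α = x i α * ∑ β, φ x i β := by
  have hden : 0 < 1 + ∑ β, (x i β + φ x i β) :=
    add_pos_of_pos_of_nonneg one_pos (sum_nonneg fun β _ ↦ hpos β)
  have hα : x i α + (x i α + φ x i α) = x i α * (1 + ∑ β, (x i β + φ x i β)) :=
    (div_eq_iff hden.ne').1 (congrFun (congrFun hx i) α)
  rw [sum_add_distrib, hsum] at hα
  linarith

theorem exists_incentive_equilibrium_general [Finite ι] [∀ i, Nonempty (κ i)]
    (hcont : ContinuousOn φ (Set.univ.pi fun i ↦ stdSimplex ℝ (κ i)))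
    (hpos : ∀ x ∈ Set.univ.pi fun i ↦ stdSimplex ℝ (κ i), ∀ i α, 0 ≤ x i α + φ x i α) :
    ∃ x ∈ Set.univ.pi fun i ↦ stdSimplex ℝ (κ i), ∀ i α, φ x i α = x i α * ∑ β, φ x i β := by
  obtain ⟨x, hx, hfix⟩ := hasFixedPointProperty_pi_stdSimplex (incentiveUpdate φ)
    (continuousOn_incentiveUpdate hcont hpos) fun x hx ↦ incentiveUpdate_mem hx (hpos x hx)
  exact ⟨x, hx, fun i ↦ eq_mul_sum_of_isFixedPt_incentiveUpdate hfix (hx i trivial).2 (hpos x hx i)⟩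

end Product

theorem Δset_eq_pi_stdSimplex {n : ℕ} (s : Fin n → ℕ) :
    Δset s = Set.univ.pi fun i ↦ stdSimplex ℝ (Fin (s i + 1)) := by
  ext x
  simp only [Δset, stdSimplex, Set.mem_univ_pi, Set.mem_ofPred_eq, forall_and]

/-- Main theorem: a continuous incentive function with `x_{iα} + φ_{iα}(x) ≥ 0` on `Δ`
admits an incentive equilibrium in `Δ` for any finite game. -/
theorem exists_incentive_equilibrium {n : ℕ} (hn : 0 < n) (s : Fin n → ℕ)
    (φ : (∀ i, Fin (s i + 1) → ℝ) → ∀ i, Fin (s i + 1) → ℝ)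
    (hφ : IsInc φ) (hcont : Continuous φ)
    (hpos : ∀ x ∈ Δset s, ∀ i α, 0 ≤ x i α + φ x i α) :
    ∃ x ∈ Δset s, IncEq φ x := by
  rw [Δset_eq_pi_stdSimplex] at hpos ⊢
  exact exists_incentive_equilibrium_general hcont.continuousOn hpos
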